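/- Let G be a subgroup of U(2^N) and t ∈ ℕ. There exist finitely many pairs (λⱼ, Uⱼ) with Uⱼ ∈ C_{N,G}, λⱼ ∈ ℝ, Σλⱼ = 1, and Σⱼ λⱼ Uⱼ^⊗t L Uⱼ†^⊗t = Φ_{t,U_{N,G}}(L) for all L (i.e., a weighted G-symmetric unitary t-design supported on C_{N,G}) if and only if C_{N,G} itself is an (unweighted) G-symmetric unitary t-design, i.e., Φ_{t,C_{N,G}} = Φ_{t,U_{N,G}}. -/

import Mathlib

open Matrix MeasureTheory

/-- Basis index for `N` qubits. -/
abbrev QubitIdx (N : ℕ) := Fin N → Fin 2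

/-- Linear operators on the Hilbert space `(ℂ²)^⊗N`, as matrices. -/
abbrev Op (N : ℕ) := Matrix (QubitIdx N) (QubitIdx N) ℂ

/-- The single-qubit Pauli matrices I, X, Y, Z. -/
noncomputable def σ1 : Fin 4 → Matrix (Fin 2) (Fin 2) ℂ
  | 0 => 1
  | 1 => !![0, 1; 1, 0]
  | 2 => !![0, -Complex.I; Complex.I, 0]
  | 3 => !![1, 0; 0, -1]

/-- The unsigned Pauli operator on `N` qubits indexed by `a : Fin N → Fin 4`
(the Kronecker product of the single-qubit Paulis `σ1 (a k)`). -/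
noncomputable def pauli {N : ℕ} (a : Fin N → Fin 4) : Op N :=
  Matrix.of fun i j => ∏ k, σ1 (a k) (i k) (j k)

/-- The phase factors `{±1, ±i}`. -/
def phases : Set ℂ := {1, -1, Complex.I, -Complex.I}

/-- The Pauli group on `N` qubits: phased unsigned Paulis. -/
def PauliGroup (N : ℕ) : Set (Op N) :=
  {P | ∃ c ∈ phases, ∃ a : Fin N → Fin 4, P = c • pauli a}

/-- A Clifford operator: a unitary whose conjugation action preserves the Pauli group. -/
def IsClifford {N : ℕ} (U : Op N) : Prop :=
  U ∈ Matrix.unitaryGroup (QubitIdx N) ℂ ∧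
    ∀ P ∈ PauliGroup N, U * P * Uᴴ ∈ PauliGroup N

/-- The `G`-symmetric unitary group `U_{N,G}`: unitaries commuting with every element of `G`. -/
def UnitarySym (N : ℕ) (G : Set (Op N)) : Set (Op N) :=
  {U | U ∈ Matrix.unitaryGroup (QubitIdx N) ℂ ∧ ∀ g ∈ G, U * g = g * U}

/-- The `G`-symmetric Clifford group `C_{N,G}`. -/
def CliffordSym (N : ℕ) (G : Set (Op N)) : Set (Op N) :=
  {U | IsClifford U ∧ U ∈ UnitarySym N G}

/-- `G` is a subgroup of the unitary group on `N` qubits. -/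
def IsUnitarySubgroup {N : ℕ} (G : Set (Op N)) : Prop :=
  (∀ g ∈ G, g ∈ Matrix.unitaryGroup (QubitIdx N) ℂ) ∧ (1 : Op N) ∈ G ∧
    (∀ g ∈ G, ∀ h ∈ G, g * h ∈ G) ∧ (∀ g ∈ G, gᴴ ∈ G)

/-- Operators on the `t`-fold tensor power `H^⊗t` of the `N`-qubit Hilbert space. -/
abbrev BigOp (N t : ℕ) := Matrix (Fin t → QubitIdx N) (Fin t → QubitIdx N) ℂ

/-- The `t`-fold tensor (Kronecker) power `A^⊗t` of an operator `A`. -/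
noncomputable def tpow {N : ℕ} (t : ℕ) (A : Op N) : BigOp N t :=
  Matrix.of fun i j => ∏ s, A (i s) (j s)

noncomputable instance OpMeasurableSpace {N : ℕ} : MeasurableSpace (Op N) := borel (Op N)

/-- The `t`-fold twirling channel `Φ_{t,μ}(L) = ∫ U^⊗t L (U^⊗t)† dμ(U)`, defined entrywise. -/
noncomputable def twirl {N : ℕ} (t : ℕ) (μ : Measure (Op N)) (L : BigOp N t) : BigOp N t :=
  Matrix.of fun i j => ∫ U, (tpow t U * L * (tpow t U)ᴴ) i j ∂μ

/-- The Kronecker power `A^⊗N` of a single-qubit operator, as an operator on `N` qubits. -/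
noncomputable def kronPow {N : ℕ} (A : Matrix (Fin 2) (Fin 2) ℂ) : Op N :=
  Matrix.of fun i j => ∏ k, A (i k) (j k)

/-- The single-qubit unitary `e^{iθZ}`. -/
noncomputable def expZ (θ : ℝ) : Matrix (Fin 2) (Fin 2) ℂ :=
  !![Complex.exp ((θ : ℂ) * Complex.I), 0; 0, Complex.exp (-(θ : ℂ) * Complex.I)]

/-- The permutation operator `V_σ` on the threefold tensor power `H^⊗3`. -/
noncomputable def permOp {N : ℕ} (σ : Equiv.Perm (Fin 3)) : BigOp N 3 :=
  Matrix.of fun i j => if i = j ∘ ⇑σ⁻¹ then 1 else 0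

/-- The tensor product `G₁ ⊗ G₂ ⊗ G₃` as an operator on `H^⊗3`. -/
noncomputable def tprod3 {N : ℕ} (G₁ G₂ G₃ : Op N) : BigOp N 3 :=
  Matrix.of fun i j => G₁ (i 0) (j 0) * G₂ (i 1) (j 1) * G₃ (i 2) (j 2)

/-- The matrix coefficients of the superoperator `L ↦ A^⊗t L (A^⊗t)†`. -/
noncomputable def conjCoeff {N : ℕ} (t : ℕ) (A : Op N)
    (p : (Fin t → QubitIdx N) × (Fin t → QubitIdx N) × (Fin t → QubitIdx N) × (Fin t → QubitIdx N)) :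
    ℂ :=
  tpow t A p.1 p.2.1 * star (tpow t A p.2.2.1 p.2.2.2)

instance OpBorelSpace {N : ℕ} : BorelSpace (Op N) := ⟨rfl⟩

lemma conj_apply_eq_sum_conjCoeff {N : ℕ} (t : ℕ) (A : Op N) (L : BigOp N t)
    (i j : Fin t → QubitIdx N) :
    (tpow t A * L * (tpow t A)ᴴ) i j = ∑ l, ∑ k, conjCoeff t A (i, k, j, l) * L k l := by
  simp only [Matrix.mul_apply, Matrix.conjTranspose_apply, conjCoeff, Finset.sum_mul]
  refine Finset.sum_congr rfl fun l _ => Finset.sum_congr rfl fun k _ => ?_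
  ring

lemma tpow_mul {N : ℕ} (t : ℕ) (A B : Op N) : tpow t (A * B) = tpow t A * tpow t B := by
  ext i j
  simp only [tpow, Matrix.of_apply, Matrix.mul_apply, ← Finset.prod_mul_distrib]
  rw [Finset.prod_univ_sum, Fintype.piFinset_univ]

lemma conj_tpow_mul {N : ℕ} (t : ℕ) (A B : Op N) (L : BigOp N t) :
    tpow t (A * B) * L * (tpow t (A * B))ᴴ =
      tpow t A * (tpow t B * L * (tpow t B)ᴴ) * (tpow t A)ᴴ := by
  simp only [tpow_mul, Matrix.conjTranspose_mul, Matrix.mul_assoc]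

lemma continuous_conjCoeff {N : ℕ} (t : ℕ) : Continuous (conjCoeff (N := N) t) := by
  refine continuous_pi fun p => ?_
  simp only [conjCoeff, tpow, Matrix.of_apply]
  fun_prop

lemma continuous_conj_tpow_apply {N : ℕ} (t : ℕ) (L : BigOp N t) (i j : Fin t → QubitIdx N) :
    Continuous fun U : Op N => (tpow t U * L * (tpow t U)ᴴ) i j := by
  simp only [conj_apply_eq_sum_conjCoeff]
  exact continuous_finsetSum _ fun l _ => continuous_finsetSum _ fun k _ =>
    ((continuous_apply _).comp (continuous_conjCoeff t)).mul continuous_const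

lemma norm_tpow_apply_le_one {N : ℕ} (t : ℕ) {A : Op N}
    (hA : A ∈ Matrix.unitaryGroup (QubitIdx N) ℂ) (i j : Fin t → QubitIdx N) :
    ‖tpow t A i j‖ ≤ 1 := by
  simp only [tpow, Matrix.of_apply, norm_prod]
  exact Finset.prod_le_one (fun _ _ => norm_nonneg _) fun _ _ => entry_norm_bound_of_unitary hA _ _

lemma norm_conjCoeff_le_one {N : ℕ} (t : ℕ) {A : Op N}
    (hA : A ∈ Matrix.unitaryGroup (QubitIdx N) ℂ) : ‖conjCoeff t A‖ ≤ 1 := by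
  refine (pi_norm_le_iff_of_nonneg zero_le_one).2 fun p => ?_
  rw [conjCoeff, norm_mul, norm_star]
  exact mul_le_one₀ (norm_tpow_apply_le_one t hA _ _) (norm_nonneg _)
    (norm_tpow_apply_le_one t hA _ _)

section Twirl

variable {N : ℕ} (t : ℕ) {μ : Measure (Op N)}

lemma integrable_conjCoeff [IsFiniteMeasure μ]
    (hμ : ∀ᵐ U ∂μ, U ∈ Matrix.unitaryGroup (QubitIdx N) ℂ) :
    Integrable (conjCoeff t) μ :=
  Integrable.of_bound (continuous_conjCoeff t).measurable.aestronglyMeasurable 1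
    (hμ.mono fun _ hU => norm_conjCoeff_le_one t hU)

lemma integrable_conj_tpow_apply [IsFiniteMeasure μ]
    (hμ : ∀ᵐ U ∂μ, U ∈ Matrix.unitaryGroup (QubitIdx N) ℂ) (L : BigOp N t)
    (i j : Fin t → QubitIdx N) :
    Integrable (fun U => (tpow t U * L * (tpow t U)ᴴ) i j) μ := by
  simp only [conj_apply_eq_sum_conjCoeff]
  exact integrable_finsetSum _ fun l _ => integrable_finsetSum _ fun k _ =>
    ((integrable_conjCoeff t hμ).eval _).mul_const _

lemma twirl_apply_eq_sum [IsFiniteMeasure μ]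
    (hμ : ∀ᵐ U ∂μ, U ∈ Matrix.unitaryGroup (QubitIdx N) ℂ) (L : BigOp N t)
    (i j : Fin t → QubitIdx N) :
    twirl t μ L i j = ∑ l, ∑ k, (∫ U, conjCoeff t U ∂μ) (i, k, j, l) * L k l := by
  have hint := fun p => (integrable_conjCoeff t hμ).eval p
  simp only [twirl, Matrix.of_apply, conj_apply_eq_sum_conjCoeff]
  rw [integral_finsetSum _ fun l _ => integrable_finsetSum _ fun k _ => (hint _).mul_const _]
  refine Finset.sum_congr rfl fun l _ => ?_
  rw [integral_finsetSum _ fun k _ => (hint _).mul_const _]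
  refine Finset.sum_congr rfl fun k _ => ?_
  rw [integral_mul_const, eval_integral hint]

lemma twirl_sum_smul [IsFiniteMeasure μ]
    (hμ : ∀ᵐ U ∂μ, U ∈ Matrix.unitaryGroup (QubitIdx N) ℂ) {ι : Type*} (s : Finset ι)
    (c : ι → ℂ) (L : ι → BigOp N t) :
    twirl t μ (∑ a ∈ s, c a • L a) = ∑ a ∈ s, c a • twirl t μ (L a) := by
  ext i j
  simp only [twirl, Matrix.of_apply, Matrix.mul_sum, Matrix.sum_mul, Matrix.sum_apply,
    Matrix.mul_smul, Matrix.smul_mul, Matrix.smul_apply, smul_eq_mul]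
  rw [integral_finsetSum _ fun a _ => (integrable_conj_tpow_apply t hμ (L a) i j).const_mul (c a)]
  simp only [integral_const_mul]

/-- Right invariance of `μ` lets the twirl absorb conjugation on the inside. -/
lemma twirl_conj_of_map_mul_right {V : Op N} (hV : Measure.map (fun U => U * V) μ = μ)
    (L : BigOp N t) : twirl t μ (tpow t V * L * (tpow t V)ᴴ) = twirl t μ L := by
  ext i j
  simp only [twirl, Matrix.of_apply, ← conj_tpow_mul]
  conv_rhs => rw [← hV]
  have hmul : Continuous fun U : Op N => U * V := by fun_prop
  rw [integral_map hmul.measurable.aemeasurable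
    (continuous_conj_tpow_apply t L i j).measurable.aestronglyMeasurable]

/-- Left invariance of `μ` makes the twirled operator invariant under conjugation. -/
lemma conj_twirl_of_map_mul_left [IsFiniteMeasure μ]
    (hμ : ∀ᵐ U ∂μ, U ∈ Matrix.unitaryGroup (QubitIdx N) ℂ) {V : Op N}
    (hV : Measure.map (fun U => V * U) μ = μ) (L : BigOp N t) :
    tpow t V * twirl t μ L * (tpow t V)ᴴ = twirl t μ L := by
  ext i j
  have hint := integrable_conj_tpow_apply t hμ L
  have hmul : Continuous fun U : Op N => V * U := by fun_prop
  calc (tpow t V * twirl t μ L * (tpow t V)ᴴ) i j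
      = ∫ U, (tpow t (V * U) * L * (tpow t (V * U))ᴴ) i j ∂μ := by
        simp only [conj_tpow_mul]
        simp only [conj_apply_eq_sum_conjCoeff t V]
        rw [integral_finsetSum _ fun l _ => integrable_finsetSum _ fun k _ =>
          (hint k l).const_mul _]
        refine Finset.sum_congr rfl fun l _ => ?_
        rw [integral_finsetSum _ fun k _ => (hint k l).const_mul _]
        refine Finset.sum_congr rfl fun k _ => ?_
        rw [integral_const_mul]
        rfl
    _ = ∫ U, (tpow t U * L * (tpow t U)ᴴ) i j ∂(Measure.map (fun U => V * U) μ) := by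
        rw [integral_map hmul.measurable.aemeasurable
          (continuous_conj_tpow_apply t L i j).measurable.aestronglyMeasurable]
    _ = twirl t μ L i j := by rw [hV]; rfl

lemma twirl_eq_self [IsProbabilityMeasure μ] {L : BigOp N t}
    (hL : ∀ᵐ U ∂μ, tpow t U * L * (tpow t U)ᴴ = L) : twirl t μ L = L := by
  ext i j
  rw [twirl, Matrix.of_apply, integral_congr_ae (g := fun _ => L i j)
    (hL.mono fun U hU => by simp only [hU])]
  simp

/-- The twirl over a probability measure carried by a set of unitaries is a finite affine
combination of conjugations by elements of that set. -/
lemma exists_sum_smul_conj_eq_twirl [IsProbabilityMeasure μ] {S : Set (Op N)}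
    (hS : S ⊆ Matrix.unitaryGroup (QubitIdx N) ℂ) (hμ : ∀ᵐ U ∂μ, U ∈ S) :
    ∃ (m : ℕ) (lam : Fin m → ℝ) (U : Fin m → Op N), (∀ a, U a ∈ S) ∧ ∑ a, lam a = 1 ∧
      ∀ L : BigOp N t,
        ∑ a, (lam a : ℂ) • (tpow t (U a) * L * (tpow t (U a))ᴴ) = twirl t μ L := by
  have hunit : ∀ᵐ U ∂μ, U ∈ Matrix.unitaryGroup (QubitIdx N) ℂ := hμ.mono fun U hU => hS hU
  have hmem : ∫ U, conjCoeff t U ∂μ ∈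
      affineSpan ℝ (Set.range fun U : S => conjCoeff t (U : Op N)) :=
    (AffineSubspace.convex _).integral_mem (AffineSubspace.closed_of_finiteDimensional _)
      (hμ.mono fun U hU => subset_affineSpan ℝ _ ⟨⟨U, hU⟩, rfl⟩) (integrable_conjCoeff t hunit)
  obtain ⟨s, w, hw, hsum⟩ := eq_affineCombination_of_mem_affineSpan hmem
  rw [Finset.affineCombination_eq_linear_combination _ _ _ hw] at hsum
  refine ⟨s.card, fun a => w (s.equivFin.symm a), fun a => (s.equivFin.symm a : S),
    fun a => (s.equivFin.symm a : S).2, ?_, fun L => ?_⟩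
  · rw [s.equivFin.symm.sum_comp fun U => w U, Finset.sum_coe_sort, hw]
  · rw [s.equivFin.symm.sum_comp fun U : s =>
      (w U : ℂ) • (tpow t ((U : S) : Op N) * L * (tpow t ((U : S) : Op N))ᴴ),
      Finset.sum_coe_sort s fun U : S =>
        (w U : ℂ) • (tpow t (U : Op N) * L * (tpow t (U : Op N))ᴴ)]
    ext i j
    simp only [twirl_apply_eq_sum t hunit, hsum, Matrix.sum_apply, Matrix.smul_apply,
      conj_apply_eq_sum_conjCoeff, Finset.sum_apply, Pi.smul_apply, Finset.sum_mul,
      Finset.mul_sum, smul_eq_mul, Complex.real_smul]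
    simp only [mul_assoc]
    rw [Finset.sum_comm]
    exact Finset.sum_congr rfl fun l _ => Finset.sum_comm

end Twirl

/-- there is a weighted `G`-symmetric unitary `t`-design supported on
`C_{N,G}` if and only if `C_{N,G}` itself is an (unweighted) `G`-symmetric unitary
`t`-design. -/
theorem stmt19 {N : ℕ} (t : ℕ) (G : Set (Op N)) (hG : IsUnitarySubgroup G)
    (μC μU : Measure (Op N)) [IsProbabilityMeasure μC] [IsProbabilityMeasure μU]
    (hCsupp : ∀ᵐ U ∂μC, U ∈ CliffordSym N G)
    (hUsupp : ∀ᵐ U ∂μU, U ∈ UnitarySym N G)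
    (hCinvL : ∀ V ∈ CliffordSym N G, Measure.map (fun U => V * U) μC = μC)
    (hCinvR : ∀ V ∈ CliffordSym N G, Measure.map (fun U => U * V) μC = μC)
    (hUinvL : ∀ V ∈ UnitarySym N G, Measure.map (fun U => V * U) μU = μU)
    (hUinvR : ∀ V ∈ UnitarySym N G, Measure.map (fun U => U * V) μU = μU) :
    (∃ (m : ℕ) (lam : Fin m → ℝ) (U : Fin m → Op N),
        (∀ j, U j ∈ CliffordSym N G) ∧ (∑ j, lam j) = 1 ∧
        ∀ L : BigOp N t,
          (∑ j, (lam j : ℂ) • (tpow t (U j) * L * (tpow t (U j))ᴴ)) = twirl t μU L) ↔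
      (∀ L : BigOp N t, twirl t μC L = twirl t μU L) := by
  have hCunit : ∀ᵐ U ∂μC, U ∈ Matrix.unitaryGroup (QubitIdx N) ℂ := hCsupp.mono fun U hU => hU.2.1
  have hUunit : ∀ᵐ U ∂μU, U ∈ Matrix.unitaryGroup (QubitIdx N) ℂ := hUsupp.mono fun U hU => hU.1
  constructor
  · rintro ⟨m, lam, U, hU, hlam, hdesign⟩ L
    have hlam' : ∑ j, (lam j : ℂ) = 1 := by exact_mod_cast hlam
    calc twirl t μC L
        = ∑ j, (lam j : ℂ) • twirl t μC (tpow t (U j) * L * (tpow t (U j))ᴴ) := by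
          simp only [twirl_conj_of_map_mul_right t (hCinvR _ (hU _)), ← Finset.sum_smul, hlam',
            one_smul]
      _ = twirl t μC (twirl t μU L) := by rw [← twirl_sum_smul t hCunit, hdesign]
      _ = twirl t μU L := twirl_eq_self t (hCsupp.mono fun V hV =>
          conj_twirl_of_map_mul_left t hUunit (hUinvL V hV.2) L)
  · intro h
    obtain ⟨m, lam, U, hU, hlam, hdesign⟩ :=
      exists_sum_smul_conj_eq_twirl t (fun _ hU => hU.2.1) hCsupp
    exact ⟨m, lam, U, hU, hlam, fun L => (hdesign L).trans (h L)⟩
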